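/- Let Ω ⊆ ℝ^N be Lebesgue measurable, T > 0, φ > 1, and let σ be real with σ > dim̄_B^φ(∞,Ω) and σ > -N. Then the integral ∫_{B_T(0)^c ∩ Ω} |x|^{-σ-N} dx is finite. In particular, the distance zeta function at infinity ζ_{∞,Ω}(s) := ∫_{B_T(0)^c ∩ Ω} |x|^{-s-N} dx converges absolutely for every complex s with Re s > max{-N, dim̄_B^φ(∞,Ω)}. -/

import Mathlib

open MeasureTheory Filter Set
open scoped ENNReal NNReal Topology

noncomputable section

/-- The `[a,b)`-shell centered at the origin in `ℝ^N`. -/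
def shell (N : ℕ) (a b : ℝ) : Set (EuclideanSpace ℝ (Fin N)) :=
  {x | a ≤ ‖x‖ ∧ ‖x‖ < b}

/-- The complement of the open ball `B_t(0)` in `ℝ^N`. -/
def farBall (N : ℕ) (t : ℝ) : Set (EuclideanSpace ℝ (Fin N)) :=
  {x | t ≤ ‖x‖}

/-- Upper φ-shell Minkowski content of `Ω` at infinity. -/
def upperShellContent (N : ℕ) (Ω : Set (EuclideanSpace ℝ (Fin N))) (φ r : ℝ) : ℝ≥0∞ :=
  Filter.limsup (fun t : ℝ =>
    volume (shell N t (φ * t) ∩ Ω) / ENNReal.ofReal (t ^ ((N : ℝ) + r))) Filter.atTop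

/-- Lower φ-shell Minkowski content of `Ω` at infinity. -/
def lowerShellContent (N : ℕ) (Ω : Set (EuclideanSpace ℝ (Fin N))) (φ r : ℝ) : ℝ≥0∞ :=
  Filter.liminf (fun t : ℝ =>
    volume (shell N t (φ * t) ∩ Ω) / ENNReal.ofReal (t ^ ((N : ℝ) + r))) Filter.atTop

/-- Upper Minkowski content of `Ω` at infinity. -/
def upperContent (N : ℕ) (Ω : Set (EuclideanSpace ℝ (Fin N))) (r : ℝ) : ℝ≥0∞ :=
  Filter.limsup (fun t : ℝ =>
    volume (farBall N t ∩ Ω) / ENNReal.ofReal (t ^ ((N : ℝ) + r))) Filter.atTop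

/-- Lower Minkowski content of `Ω` at infinity. -/
def lowerContent (N : ℕ) (Ω : Set (EuclideanSpace ℝ (Fin N))) (r : ℝ) : ℝ≥0∞ :=
  Filter.liminf (fun t : ℝ =>
    volume (farBall N t ∩ Ω) / ENNReal.ofReal (t ^ ((N : ℝ) + r))) Filter.atTop

/-- Upper φ-shell Minkowski dimension of `Ω` at infinity, as an extended real. -/
def upperShellDim (N : ℕ) (Ω : Set (EuclideanSpace ℝ (Fin N))) (φ : ℝ) : EReal :=
  sInf ((fun r : ℝ => (r : EReal)) '' {r : ℝ | upperShellContent N Ω φ r = 0})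

/-- Lower φ-shell Minkowski dimension of `Ω` at infinity, as an extended real. -/
def lowerShellDim (N : ℕ) (Ω : Set (EuclideanSpace ℝ (Fin N))) (φ : ℝ) : EReal :=
  sInf ((fun r : ℝ => (r : EReal)) '' {r : ℝ | lowerShellContent N Ω φ r = 0})

theorem measurableSet_shell (N : ℕ) (a b : ℝ) : MeasurableSet (shell N a b) :=
  (measurableSet_le measurable_const measurable_norm).inter
    (measurableSet_lt measurable_norm measurable_const)

theorem measurableSet_farBall (N : ℕ) (t : ℝ) : MeasurableSet (farBall N t) :=
  measurableSet_le measurable_const measurable_norm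

theorem volume_shell_lt_top (N : ℕ) (a b : ℝ) : volume (shell N a b) < ⊤ :=
  (measure_mono fun x (hx : a ≤ ‖x‖ ∧ ‖x‖ < b) => mem_ball_zero_iff.2 hx.2).trans_lt
    (measure_ball_lt_top (x := 0) (r := b))

/-- A negative power of the norm is bounded on a shell by its value on the inner sphere. -/
theorem lintegral_norm_rpow_shell_le {N : ℕ} {Ω : Set (EuclideanSpace ℝ (Fin N))}
    (hΩ : MeasurableSet Ω) {a b p : ℝ} (ha : 0 < a) (hp : p ≤ 0) :
    ∫⁻ x in shell N a b ∩ Ω, ENNReal.ofReal (‖x‖ ^ p) ≤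
      ENNReal.ofReal (a ^ p) * volume (shell N a b ∩ Ω) := by
  rw [← setLIntegral_const]
  refine setLIntegral_mono' ((measurableSet_shell N a b).inter hΩ) fun x hx => ?_
  exact ENNReal.ofReal_le_ofReal (Real.rpow_le_rpow_of_nonpos ha hx.1.1 hp)

theorem farBall_subset_iUnion_shell (N : ℕ) {t φ : ℝ} (ht : 0 < t) (hφ : 1 < φ) :
    farBall N t ⊆ ⋃ n : ℕ, shell N (φ ^ n * t) (φ * (φ ^ n * t)) := by
  intro x hx
  obtain ⟨n, hn, hn'⟩ := exists_nat_pow_near ((one_le_div ht).2 hx) hφ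
  refine mem_iUnion.2 ⟨n, (le_div_iff₀ ht).1 hn, ?_⟩
  rw [← mul_assoc, ← pow_succ']
  exact (div_lt_iff₀ ht).1 hn'

/-- If the shells of `Ω` beyond radius `t` have volume at most `u ^ (N + r)`, then the integral of
`‖x‖ ^ (-σ - N)` over the part of `Ω` beyond `t` is finite for every `σ > r`. -/
theorem lintegral_farBall_lt_top_of_volume_shell_le {N : ℕ} {Ω : Set (EuclideanSpace ℝ (Fin N))}
    (hΩ : MeasurableSet Ω) {t φ r σ : ℝ} (ht : 0 < t) (hφ : 1 < φ) (hr : r < σ)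
    (hσN : -(N : ℝ) < σ)
    (h : ∀ u, t ≤ u → volume (shell N u (φ * u) ∩ Ω) ≤ ENNReal.ofReal (u ^ ((N : ℝ) + r))) :
    ∫⁻ x in farBall N t ∩ Ω, ENNReal.ofReal (‖x‖ ^ (-σ - (N : ℝ))) < ⊤ := by
  have hφ0 : 0 < φ := zero_lt_one.trans hφ
  have hsub : farBall N t ∩ Ω ⊆ ⋃ n : ℕ, shell N (φ ^ n * t) (φ * (φ ^ n * t)) ∩ Ω := by
    rw [← iUnion_inter]
    exact inter_subset_inter_left _ (farBall_subset_iUnion_shell N ht hφ)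
  have hterm (n : ℕ) : ∫⁻ x in shell N (φ ^ n * t) (φ * (φ ^ n * t)) ∩ Ω,
      ENNReal.ofReal (‖x‖ ^ (-σ - (N : ℝ))) ≤
        ENNReal.ofReal ((φ ^ (r - σ)) ^ n * t ^ (r - σ)) := by
    have hu : 0 < φ ^ n * t := by positivity
    refine (lintegral_norm_rpow_shell_le hΩ hu (by linarith)).trans ?_
    refine (mul_le_mul_right (h _ (le_mul_of_one_le_left ht.le (one_le_pow₀ hφ.le))) _).trans ?_
    rw [← ENNReal.ofReal_mul (by positivity), ← Real.rpow_add hu,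
      show -σ - (N : ℝ) + (N + r) = r - σ by ring, Real.mul_rpow (by positivity) ht.le,
      Real.rpow_pow_comm hφ0.le]
  have hsum : Summable fun n : ℕ => (φ ^ (r - σ)) ^ n * t ^ (r - σ) :=
    (summable_geometric_of_lt_one (by positivity)
      (Real.rpow_lt_one_of_one_lt_of_neg hφ (by linarith))).mul_right _
  calc _ ≤ _ := lintegral_mono_set hsub
    _ ≤ _ := lintegral_iUnion_le _ _
    _ ≤ _ := ENNReal.tsum_le_tsum hterm
    _ < ⊤ := hsum.tsum_ofReal_lt_top

theorem exists_volume_shell_le_of_upperShellDim_lt {N : ℕ} {Ω : Set (EuclideanSpace ℝ (Fin N))}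
    {φ σ : ℝ} (hσ : upperShellDim N Ω φ < (σ : EReal)) :
    ∃ r < σ, ∀ᶠ t in atTop,
      volume (shell N t (φ * t) ∩ Ω) ≤ ENNReal.ofReal (t ^ ((N : ℝ) + r)) := by
  obtain ⟨_, ⟨r, hr, rfl⟩, hrσ⟩ := sInf_lt_iff.1 hσ
  refine ⟨r, EReal.coe_lt_coe_iff.1 hrσ, ?_⟩
  have hlt : upperShellContent N Ω φ r < 1 := by
    rw [show upperShellContent N Ω φ r = 0 from hr]
    exact one_pos
  filter_upwards [eventually_lt_of_limsup_lt hlt, eventually_gt_atTop 0] with t ht ht0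
  have hpos : 0 < t ^ ((N : ℝ) + r) := Real.rpow_pos_of_pos ht0 _
  simpa using (ENNReal.div_le_iff (ENNReal.ofReal_pos.2 hpos).ne' ENNReal.ofReal_ne_top).1 ht.le

theorem lintegral_norm_rpow_farBall_lt_top {N : ℕ} {Ω : Set (EuclideanSpace ℝ (Fin N))}
    (hΩ : MeasurableSet Ω) {T φ σ : ℝ} (hT : 0 < T) (hφ : 1 < φ)
    (hσ : upperShellDim N Ω φ < (σ : EReal)) (hσN : -(N : ℝ) < σ) :
    ∫⁻ x in farBall N T ∩ Ω, ENNReal.ofReal (‖x‖ ^ (-σ - (N : ℝ))) < ⊤ := by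
  obtain ⟨r, hr, hvol⟩ := exists_volume_shell_le_of_upperShellDim_lt hσ
  obtain ⟨t, hvol, ht⟩ :=
    ((eventually_forall_ge_atTop.2 hvol).and (eventually_gt_atTop 0)).exists
  have hsub : farBall N T ∩ Ω ⊆ (shell N T t ∩ Ω) ∪ (farBall N t ∩ Ω) := by
    rintro x ⟨hx, hxΩ⟩
    rcases lt_or_ge ‖x‖ t with h | h
    · exact Or.inl ⟨⟨hx, h⟩, hxΩ⟩
    · exact Or.inr ⟨h, hxΩ⟩
  refine (lintegral_mono_set hsub).trans_lt ((lintegral_union_le _ _ _).trans_lt ?_)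
  refine ENNReal.add_lt_top.2 ⟨?_,
    lintegral_farBall_lt_top_of_volume_shell_le hΩ ht hφ hr hσN hvol⟩
  refine (lintegral_norm_rpow_shell_le hΩ hT (by linarith)).trans_lt ?_
  exact ENNReal.mul_lt_top ENNReal.ofReal_lt_top
    ((measure_mono inter_subset_left).trans_lt (volume_shell_lt_top N T t))

theorem zeta_at_infinity_absolutely_convergent
    (N : ℕ) (Ω : Set (EuclideanSpace ℝ (Fin N))) (hΩ : MeasurableSet Ω)
    (T : ℝ) (hT : 0 < T) (φ : ℝ) (hφ : 1 < φ)
    (σ : ℝ) (hσdim : upperShellDim N Ω φ < (σ : EReal)) (hσN : -(N : ℝ) < σ) :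
    (∫⁻ x in farBall N T ∩ Ω, ENNReal.ofReal (‖x‖ ^ (-σ - (N : ℝ)))) < ⊤ ∧
    ∀ s : ℂ, upperShellDim N Ω φ < (s.re : EReal) → -(N : ℝ) < s.re →
      IntegrableOn (fun x : EuclideanSpace ℝ (Fin N) =>
        ((‖x‖ : ℂ)) ^ (-s - (N : ℂ))) (farBall N T ∩ Ω) volume := by
  refine ⟨lintegral_norm_rpow_farBall_lt_top hΩ hT hφ hσdim hσN, fun s hs hsN => ⟨?_, ?_⟩⟩
  · exact ((Complex.measurable_ofReal.comp measurable_norm).pow_const _).aestronglyMeasurable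
  · rw [hasFiniteIntegral_iff_norm]
    refine lt_of_eq_of_lt ?_ (lintegral_norm_rpow_farBall_lt_top hΩ hT hφ hs hsN)
    refine setLIntegral_congr_fun ((measurableSet_farBall N T).inter hΩ) fun x hx => ?_
    simp only [Complex.norm_cpow_eq_rpow_re_of_pos (hT.trans_le hx.1), Complex.sub_re,
      Complex.neg_re, Complex.natCast_re]
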